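/- Let φ be a convex potential function, η ∈ (0, 1/2), and D a finite-covariance probability distribution on ℝ^d × {-1,1}. If u ∈ ℝ^d is a unit vector with E_{(x,y)~D}[|u·x|] > 0, then for every x₀ ∈ ℝ^d the noisy risk diverges along the direction u: lim_{λ→∞} P_{φ,D̄_η}(x₀ + λu) = ∞. -/

import Mathlib

/-!
Convexity and nonnegativity of `φ` give the tangent bound `φ z ≥ deriv φ 0 * z`, so with `a = -deriv φ 0 > 0`
and `φ ≥ 0` one has `(1 - η) φ(t) + η φ(-t) ≥ η a |t|` for all `t` (`eta_mul_abs_le`): label noise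
forces at least linear growth in both directions. As labels are `±1`, the risk at `v` is therefore
at least `η a E|v·x|`. For `v = x₀ + λ u` the reverse triangle inequality bounds this from below by
`η a (λ E|u·x| - E|x₀·x|)`, which tends to infinity since `E|u·x| > 0`; finite covariance makes
`E|x₀·x|` finite.
-/

open MeasureTheory Filter
open scoped RealInnerProductSpace ENNReal

/-- A convex potential function in the sense of Long and Servedio:
`φ` is `C¹`, convex, nonincreasing, has `φ'(0) < 0`, and `φ(x) → 0` as `x → ∞`. -/
structure IsConvexPotential (φ : ℝ → ℝ) : Prop where
  differentiable : Differentiable ℝ φ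
  continuous_deriv : Continuous (deriv φ)
  convexOn : ConvexOn ℝ Set.univ φ
  antitone : Antitone φ
  deriv_zero_neg : deriv φ 0 < 0
  tendsto_zero : Filter.Tendsto φ Filter.atTop (nhds 0)

/-- The `φ`-risk of the linear classifier `v` under the `η`-RCN corrupted version of `D`:
`E_{(x,y)~D̄_η}[φ(y (v·x))] = E_{(x,y)~D}[(1-η) φ(y (v·x)) + η φ(-y (v·x))]`.
Since a convex potential function is nonnegative, we take the (extended-real-valued)
lower integral. -/
noncomputable def noisyRisk {d : ℕ} (φ : ℝ → ℝ) (η : ℝ)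
    (D : Measure (EuclideanSpace ℝ (Fin d) × ℝ)) (v : EuclideanSpace ℝ (Fin d)) : ℝ≥0∞ :=
  ∫⁻ p, ENNReal.ofReal ((1 - η) * φ (p.2 * ⟪v, p.1⟫) + η * φ (-p.2 * ⟪v, p.1⟫)) ∂D

lemma IsConvexPotential.nonneg {φ : ℝ → ℝ} (hφ : IsConvexPotential φ) (z : ℝ) : 0 ≤ φ z :=
  hφ.antitone.le_of_tendsto hφ.tendsto_zero z

lemma IsConvexPotential.deriv_zero_mul_le {φ : ℝ → ℝ} (hφ : IsConvexPotential φ) (z : ℝ) :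
    deriv φ 0 * z ≤ φ z := by
  have h0 := hφ.nonneg 0
  rcases lt_trichotomy z 0 with hz | rfl | hz
  · have h := hφ.convexOn.slope_le_deriv (Set.mem_univ z) (Set.mem_univ 0) hz
      hφ.differentiable.differentiableAt
    rw [slope_def_field, div_le_iff₀ (by linarith)] at h
    linarith
  · simpa using h0
  · have h := hφ.convexOn.deriv_le_slope (Set.mem_univ 0) (Set.mem_univ z) hz
      hφ.differentiable.differentiableAt
    rw [slope_def_field, le_div_iff₀ (by linarith)] at h
    linarith

/-- The noisy loss grows at least linearly in both directions, because each of the two signs of the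
margin carries weight at least `η`. -/
lemma IsConvexPotential.eta_mul_abs_le {φ : ℝ → ℝ} (hφ : IsConvexPotential φ) {η : ℝ}
    (hη : η ∈ Set.Ioo (0 : ℝ) (1/2)) (t : ℝ) :
    η * -deriv φ 0 * |t| ≤ (1 - η) * φ t + η * φ (-t) := by
  obtain ⟨h1, h2⟩ := hη
  have hp := hφ.nonneg t
  have hn := hφ.nonneg (-t)
  have htp := mul_le_mul_of_nonneg_left (hφ.deriv_zero_mul_le t) h1.le
  have htn := mul_le_mul_of_nonneg_left (hφ.deriv_zero_mul_le (-t)) h1.le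
  have hw : η * φ t ≤ (1 - η) * φ t := mul_le_mul_of_nonneg_right (by linarith) hp
  have := mul_nonneg h1.le hp
  have := mul_nonneg h1.le hn
  rcases abs_cases t with ⟨h, _⟩ | ⟨h, _⟩ <;> rw [h] <;> linarith

lemma integrable_abs_inner {d : ℕ} (D : Measure (EuclideanSpace ℝ (Fin d) × ℝ))
    [IsProbabilityMeasure D]
    (hcov : ∀ u : EuclideanSpace ℝ (Fin d), Integrable (fun p => ⟪u, p.1⟫ ^ 2) D)
    (v : EuclideanSpace ℝ (Fin d)) : Integrable (fun p => |⟪v, p.1⟫|) D := by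
  refine ((integrable_const (1 : ℝ)).add (hcov v)).mono' ?_ ?_
  · have : Continuous fun p : EuclideanSpace ℝ (Fin d) × ℝ => |⟪v, p.1⟫| := by fun_prop
    exact this.aestronglyMeasurable
  · refine Eventually.of_forall fun p => ?_
    simp only [Real.norm_eq_abs, abs_abs, Pi.add_apply]
    nlinarith [sq_abs ⟪v, p.1⟫, sq_nonneg (|⟪v, p.1⟫| - 1), abs_nonneg ⟪v, p.1⟫]

lemma ofReal_le_noisyRisk {d : ℕ} {φ : ℝ → ℝ} (hφ : IsConvexPotential φ)
    {η : ℝ} (hη : η ∈ Set.Ioo (0 : ℝ) (1/2))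
    (D : Measure (EuclideanSpace ℝ (Fin d) × ℝ)) [IsProbabilityMeasure D]
    (hlab : ∀ᵐ p ∂D, p.2 = 1 ∨ p.2 = -1)
    (hcov : ∀ u : EuclideanSpace ℝ (Fin d), Integrable (fun p => ⟪u, p.1⟫ ^ 2) D)
    (v : EuclideanSpace ℝ (Fin d)) :
    ENNReal.ofReal (η * -deriv φ 0 * ∫ p, |⟪v, p.1⟫| ∂D) ≤ noisyRisk φ η D v := by
  have hc : 0 ≤ η * -deriv φ 0 := mul_nonneg hη.1.le (by linarith [hφ.deriv_zero_neg])
  rw [← integral_const_mul, ofReal_integral_eq_lintegral_ofReal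
    ((integrable_abs_inner D hcov v).const_mul _)
    (Eventually.of_forall fun p => mul_nonneg hc (abs_nonneg _))]
  refine lintegral_mono_ae ?_
  filter_upwards [hlab] with p hp
  refine ENNReal.ofReal_le_ofReal ?_
  have h := hφ.eta_mul_abs_le hη (p.2 * ⟪v, p.1⟫)
  have hy : |p.2| = 1 := by rcases hp with h | h <;> simp [h]
  rwa [abs_mul, hy, one_mul, ← neg_mul] at h

/-- If `u` is a unit vector with `E_{(x,y)~D}[|u·x|] > 0`, then for every `x₀` the noisy risk
diverges to `∞` along the direction `u`. -/
theorem noisyRisk_tendsto_top {d : ℕ} (φ : ℝ → ℝ) (hφ : IsConvexPotential φ)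
    (η : ℝ) (hη : η ∈ Set.Ioo (0 : ℝ) (1/2))
    (D : Measure (EuclideanSpace ℝ (Fin d) × ℝ)) [IsProbabilityMeasure D]
    (hlab : ∀ᵐ p ∂D, p.2 = 1 ∨ p.2 = -1)
    (hcov : ∀ u : EuclideanSpace ℝ (Fin d), Integrable (fun p => ⟪u, p.1⟫ ^ 2) D)
    (u : EuclideanSpace ℝ (Fin d)) (hu : ‖u‖ = 1)
    (hpos : 0 < ∫ p, |⟪u, p.1⟫| ∂D) :
    ∀ x₀ : EuclideanSpace ℝ (Fin d),
      Filter.Tendsto (fun lam : ℝ => noisyRisk φ η D (x₀ + lam • u))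
        Filter.atTop (nhds ⊤) := by
  intro x₀
  have hc : 0 < η * -deriv φ 0 := mul_pos hη.1 (by linarith [hφ.deriv_zero_neg])
  have hlin : Tendsto (fun lam : ℝ => η * -deriv φ 0 *
      (lam * ∫ p, |⟪u, p.1⟫| ∂D - ∫ p, |⟪x₀, p.1⟫| ∂D)) atTop atTop :=
    (tendsto_atTop_add_const_right _ _ (tendsto_id.atTop_mul_const hpos)).const_mul_atTop hc
  refine tendsto_nhds_top_mono (ENNReal.tendsto_ofReal_atTop.comp hlin) ?_
  filter_upwards [eventually_ge_atTop 0] with lam hlam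
  refine le_trans (ENNReal.ofReal_le_ofReal (mul_le_mul_of_nonneg_left ?_ hc.le))
    (ofReal_le_noisyRisk hφ hη D hlab hcov (x₀ + lam • u))
  have hiu := (integrable_abs_inner D hcov u).const_mul lam
  have hix := integrable_abs_inner D hcov x₀
  rw [← integral_const_mul, ← integral_sub hiu hix]
  refine integral_mono (hiu.sub hix) (integrable_abs_inner D hcov _) fun p => ?_
  simp only [inner_add_left, real_inner_smul_left]
  have h := abs_sub_abs_le_abs_sub (lam * ⟪u, p.1⟫) (-⟪x₀, p.1⟫)
  rw [abs_mul, abs_of_nonneg hlam, abs_neg, sub_neg_eq_add, add_comm (lam * _)] at h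
  exact h
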